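/- Let d, N ≥ 1, λ > 0, and let a^{ij}_{kl} : ℝᵈ → ℝ (1 ≤ i,j ≤ d, 1 ≤ k,l ≤ N) be bounded and uniformly continuous coefficients satisfying the rank-one positivity condition Σ_{i,j,k,l} a^{ij}_{kl}(x) ξᵢ ξⱼ η^k η^l ≥ λ⁻¹ |ξ|² |η|² for all x ∈ ℝᵈ, ξ ∈ ℝᵈ, η ∈ ℝ^N. Then there exists a constant C (depending on d, N, λ, the sup norm of the coefficients, and their modulus of continuity) such that for every φ ∈ C_c^∞(ℝᵈ, ℝ^N): ∫_{ℝᵈ} Σ_{i,j,k,l} a^{ij}_{kl}(x) ∂ᵢφ^k ∂ⱼφ^l dx ≥ (2λ)⁻¹ ‖∇φ‖²_{L²} − C‖φ‖²_{L²}. -/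

import Mathlib

open MeasureTheory Set

noncomputable section

/-- Partial derivative of a scalar function on `ℝᵈ` in the `i`-th coordinate
direction. -/
def pd {d : ℕ} (i : Fin d) (g : EuclideanSpace ℝ (Fin d) → ℝ) :
    EuclideanSpace ℝ (Fin d) → ℝ :=
  fun x => fderiv ℝ g x (EuclideanSpace.single i 1)

/-!
Write the integrand as `B x (Dφ x) (Dφ x)` for a bilinear form `B x` on linear maps `E →L[ℝ] F`.
If `B` is constant and nonnegative on rank-one maps, Plancherel turns its integral into that of
`(2π)² (B (ξ ⊗ Re φ̂) (ξ ⊗ Re φ̂) + B (ξ ⊗ Im φ̂) (ξ ⊗ Im φ̂)) ≥ 0`. If `B` is uniformly continuous,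
freezing it at `y` costs at most `ε |Dφ|²` for `φ` supported near `y`. A general `φ` is localized as
`ψ (· - y) φ` with a cutoff `ψ` of small support and `∫ ψ² = 1`. Averaging over `y` recovers the
form of `φ` up to a multiple of `∫ |φ|²`, because the terms linear in `Dψ` contain
`ψ Dψ = D (ψ² / 2)`, whose integral vanishes. The lower bound with constant `Λ` follows by
subtracting `Λ` times the Hilbert–Schmidt form, which equals `|ξ|² |η|²` on rank-one maps.
-/

open InnerProductSpace (rankOne)
open ContinuousLinearMap (smulRight smulRightL)
open scoped FourierTransform LineDeriv SchwartzMap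

-- Needed to find the norm on `V →L[ℝ] V →L[ℝ] ℝ` when `V = E →L[ℝ] F`.
set_option maxSynthPendingDepth 3

section IntegralsOfForms

variable {X V : Type*} [NormedAddCommGroup V]
  [TopologicalSpace X] [MeasurableSpace X] [OpensMeasurableSpace X] {μ : Measure X}
  [IsFiniteMeasureOnCompacts μ]

theorem integrable_norm_sq_of_hasCompactSupport {v : X → V} (hv : Continuous v)
    (hvs : HasCompactSupport v) : Integrable (fun x ↦ ‖v x‖ ^ 2) μ := by
  simp only [sq]
  exact (hv.norm.mul hv.norm).integrable_of_hasCompactSupport hvs.norm.mul_left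

variable [NormedSpace ℝ V]

theorem integrable_form_of_hasCompactSupport {B : X → V →L[ℝ] V →L[ℝ] ℝ} (hB : Continuous B)
    {v : X → V} (hv : Continuous v) (hvs : HasCompactSupport v) :
    Integrable (fun x ↦ B x (v x) (v x)) μ := by
  refine ((hB.clm_apply hv).clm_apply hv).integrable_of_hasCompactSupport (hvs.mono fun x hx ↦ ?_)
  contrapose! hx
  simp_all

theorem integral_form_le_opNorm_mul_integral_norm_sq (Q : V →L[ℝ] V →L[ℝ] ℝ) {v : X → V}
    (hv : Continuous v) (hvs : HasCompactSupport v) :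
    ∫ x, Q (v x) (v x) ∂μ ≤ ‖Q‖ * ∫ x, ‖v x‖ ^ 2 ∂μ := by
  rw [← integral_const_mul]
  refine integral_mono (integrable_form_of_hasCompactSupport continuous_const hv hvs)
    ((integrable_norm_sq_of_hasCompactSupport hv hvs).const_mul _) fun x ↦ ?_
  calc
    Q (v x) (v x) ≤ ‖Q‖ * ‖v x‖ * ‖v x‖ := (le_abs_self _).trans (Q.le_opNorm₂ _ _)
    _ = ‖Q‖ * ‖v x‖ ^ 2 := by ring

end IntegralsOfForms

section Localization

variable {E F : Type*} [NormedAddCommGroup E] [NormedAddCommGroup F] [NormedSpace ℝ F]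

/-- The restriction of `φ` to a neighbourhood of `y` by means of the translated cutoff
`ψ (· - y)`. -/
def localize (ψ : E → ℝ) (φ : E → F) (y : E) : E → F := fun x ↦ ψ (x - y) • φ x

theorem hasCompactSupport_localize {ψ : E → ℝ} {φ : E → F} (hφ : HasCompactSupport φ) (y : E) :
    HasCompactSupport (localize ψ φ y) :=
  hφ.smul_left

variable [NormedSpace ℝ E]

theorem contDiff_localize {n : WithTop ℕ∞} {ψ : E → ℝ} {φ : E → F} (hψ : ContDiff ℝ n ψ)
    (hφ : ContDiff ℝ n φ) (y : E) : ContDiff ℝ n (localize ψ φ y) :=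
  (hψ.comp (contDiff_id.sub contDiff_const)).smul hφ

theorem fderiv_localize {ψ : E → ℝ} {φ : E → F} (hψ : Differentiable ℝ ψ)
    (hφ : Differentiable ℝ φ) (y x : E) :
    fderiv ℝ (localize ψ φ y) x
      = ψ (x - y) • fderiv ℝ φ x + smulRight (fderiv ℝ ψ (x - y)) (φ x) := by
  have hshift : HasFDerivAt (fun x ↦ ψ (x - y)) (fderiv ℝ ψ (x - y)) x :=
    (hasFDerivAt_comp_sub y).2 (hψ (x - y)).hasFDerivAt
  exact (hshift.smul (hφ x).hasFDerivAt).fderiv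

theorem fderiv_localize_eq_zero {ψ : E → ℝ} {φ : E → F} (hψ : Differentiable ℝ ψ)
    (hφ : Differentiable ℝ φ) {x y : E} (h : x - y ∉ tsupport ψ) :
    fderiv ℝ (localize ψ φ y) x = 0 := by
  rw [fderiv_localize hψ hφ, image_eq_zero_of_notMem_tsupport h, fderiv_of_notMem_tsupport ℝ h]
  ext v
  simp

theorem continuous_fderiv_localize {ψ : E → ℝ} {φ : E → F} (hψ : ContDiff ℝ 1 ψ)
    (hφ : ContDiff ℝ 1 φ) : Continuous fun p : E × E ↦ fderiv ℝ (localize ψ φ p.2) p.1 := by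
  have hDψ : Continuous fun p : E × E ↦ fderiv ℝ ψ (p.1 - p.2) :=
    (hψ.continuous_fderiv one_ne_zero).comp continuous_sub
  have hDφ : Continuous fun p : E × E ↦ fderiv ℝ φ p.1 :=
    (hφ.continuous_fderiv one_ne_zero).comp continuous_fst
  simp only [fderiv_localize (hψ.differentiable one_ne_zero) (hφ.differentiable one_ne_zero)]
  exact ((hψ.continuous.comp continuous_sub).smul hDφ).add
    (((smulRightL ℝ E F).continuous.comp hDψ).clm_apply (hφ.continuous.comp continuous_fst))

theorem hasCompactSupport_fderiv_localize {ψ : E → ℝ} {φ : E → F} (hψ : Differentiable ℝ ψ)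
    (hψs : HasCompactSupport ψ) (hφ : Differentiable ℝ φ) (hφs : HasCompactSupport φ) :
    HasCompactSupport fun p : E × E ↦ fderiv ℝ (localize ψ φ p.2) p.1 := by
  have hK : IsCompact ((fun q : E × E ↦ (q.1, q.1 - q.2)) '' (tsupport φ ×ˢ tsupport ψ)) :=
    (hφs.isCompact.prod hψs.isCompact).image (by fun_prop)
  refine .intro hK ?_
  rintro ⟨x, y⟩ hxy
  by_cases hx : x ∈ tsupport φ
  · exact fderiv_localize_eq_zero hψ hφ fun h ↦ hxy ⟨(x, x - y), ⟨hx, h⟩, by simp⟩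
  · exact fderiv_of_notMem_tsupport ℝ fun h ↦ hx (tsupport_smul_subset_right _ _ h)

variable [MeasurableSpace E] [BorelSpace E] {μ : Measure E}

theorem integrable_smul_fderiv_self [IsFiniteMeasureOnCompacts μ] {ψ : E → ℝ} (hψ : ContDiff ℝ 1 ψ)
    (hψs : HasCompactSupport ψ) : Integrable (fun z ↦ ψ z • fderiv ℝ ψ z) μ :=
  (hψ.continuous.smul (hψ.continuous_fderiv one_ne_zero)).integrable_of_hasCompactSupport
    hψs.smul_right

variable [FiniteDimensional ℝ E] [μ.IsAddHaarMeasure]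

theorem exists_contDiff_integral_sq_eq_one {δ : ℝ} (hδ : 0 < δ) :
    ∃ ψ : E → ℝ, ContDiff ℝ (⊤ : ℕ∞) ψ ∧ HasCompactSupport ψ ∧
      tsupport ψ ⊆ Metric.ball 0 δ ∧ ∫ z, ψ z ^ 2 ∂μ = 1 := by
  let f : ContDiffBump (0 : E) := ⟨δ / 4, δ / 2, by positivity, by linarith⟩
  have hpos : 0 < ∫ z, f z ^ 2 ∂μ := by
    refine (f.continuous.pow 2).integral_pos_of_hasCompactSupport_nonneg_nonzero
      (f.hasCompactSupport.comp_left (g := (· ^ 2)) (by simp)) (fun x ↦ sq_nonneg _) (x := 0) ?_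
    simp [f.one_of_mem_closedBall (x := 0) (by simpa using f.rIn_pos.le)]
  refine ⟨fun z ↦ (√(∫ z, f z ^ 2 ∂μ))⁻¹ * f z, contDiff_const.mul f.contDiff,
    f.hasCompactSupport.mul_left, ?_, ?_⟩
  · refine tsupport_mul_subset_right.trans ?_
    rw [f.tsupport_eq]
    exact Metric.closedBall_subset_ball (half_lt_self hδ)
  · simp only [mul_pow, inv_pow, Real.sq_sqrt hpos.le, integral_const_mul]
    exact inv_mul_cancel₀ hpos.ne'

theorem integral_smul_fderiv_self {ψ : E → ℝ} (hψ : ContDiff ℝ 1 ψ) (hψs : HasCompactSupport ψ) :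
    ∫ z, ψ z • fderiv ℝ ψ z ∂μ = 0 := by
  ext v
  have hv : Integrable (fun z ↦ ψ z * fderiv ℝ ψ z v) μ :=
    (integrable_smul_fderiv_self hψ hψs).apply_continuousLinearMap v
  have hv' : Integrable (fun z ↦ fderiv ℝ ψ z v * ψ z) μ := by simpa only [mul_comm] using hv
  have hparts := integral_mul_fderiv_eq_neg_fderiv_mul_of_integrable hv' hv
    ((hψ.continuous.mul hψ.continuous).integrable_of_hasCompactSupport hψs.mul_left)
    (fun x _ ↦ hψ.differentiable one_ne_zero x) (fun x _ ↦ hψ.differentiable one_ne_zero x)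
  simp only [mul_comm (fderiv ℝ ψ _ v)] at hparts
  rw [ContinuousLinearMap.integral_apply (integrable_smul_fderiv_self hψ hψs)]
  simpa using self_eq_neg.1 hparts

theorem integral_form_smul_add_fderiv {V : Type*} [NormedAddCommGroup V] [NormedSpace ℝ V]
    (Q : V →L[ℝ] V →L[ℝ] ℝ) (T : V) (L : (E →L[ℝ] ℝ) →L[ℝ] V)
    {ψ : E → ℝ} (hψ : ContDiff ℝ 1 ψ) (hψs : HasCompactSupport ψ) (hψ1 : ∫ z, ψ z ^ 2 ∂μ = 1) :
    ∫ z, Q (ψ z • T + L (fderiv ℝ ψ z)) (ψ z • T + L (fderiv ℝ ψ z)) ∂μ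
      = Q T T + ∫ z, Q (L (fderiv ℝ ψ z)) (L (fderiv ℝ ψ z)) ∂μ := by
  let cross : (E →L[ℝ] ℝ) →L[ℝ] ℝ := (Q T + Q.flip T) ∘L L
  have hsq : Integrable (fun z ↦ ψ z ^ 2 * Q T T) μ := by
    simpa only [Real.norm_eq_abs, sq_abs] using
      (integrable_norm_sq_of_hasCompactSupport hψ.continuous hψs).mul_const (Q T T)
  have hcross : Integrable (fun z ↦ cross (ψ z • fderiv ℝ ψ z)) μ :=
    cross.integrable_comp (integrable_smul_fderiv_self hψ hψs)
  have hmain : Integrable (fun z ↦ ψ z ^ 2 * Q T T + cross (ψ z • fderiv ℝ ψ z)) μ :=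
    hsq.add hcross
  have hgrad : Integrable (fun z ↦ Q (L (fderiv ℝ ψ z)) (L (fderiv ℝ ψ z))) μ :=
    integrable_form_of_hasCompactSupport continuous_const
      (L.continuous.comp (hψ.continuous_fderiv one_ne_zero))
      ((hψs.fderiv ℝ).comp_left (map_zero L))
  calc
    _ = ∫ z, (ψ z ^ 2 * Q T T + cross (ψ z • fderiv ℝ ψ z)
          + Q (L (fderiv ℝ ψ z)) (L (fderiv ℝ ψ z))) ∂μ := by
        refine integral_congr_ae (.of_forall fun z ↦ ?_)
        simp only [map_add, map_smul, add_apply, smul_apply, smul_eq_mul,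
          ContinuousLinearMap.comp_apply, ContinuousLinearMap.flip_apply, cross]
        ring
    _ = _ := by
        rw [integral_add hmain hgrad, integral_add hsq hcross,
          cross.integral_comp_comm (integrable_smul_fderiv_self hψ hψs),
          integral_smul_fderiv_self hψ hψs, integral_mul_const, hψ1, map_zero, one_mul, add_zero]

theorem integral_form_fderiv_localize_le (Q : (E →L[ℝ] F) →L[ℝ] (E →L[ℝ] F) →L[ℝ] ℝ)
    {ψ : E → ℝ} (hψ : ContDiff ℝ 1 ψ) (hψs : HasCompactSupport ψ) (hψ1 : ∫ z, ψ z ^ 2 ∂μ = 1)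
    {φ : E → F} (hφ : Differentiable ℝ φ) (x : E) :
    ∫ y, Q (fderiv ℝ (localize ψ φ y) x) (fderiv ℝ (localize ψ φ y) x) ∂μ
      ≤ Q (fderiv ℝ φ x) (fderiv ℝ φ x)
        + ‖Q‖ * ((∫ z, ‖fderiv ℝ ψ z‖ ^ 2 ∂μ) * ‖φ x‖ ^ 2) := by
  let tensor : (E →L[ℝ] ℝ) →L[ℝ] E →L[ℝ] F := (smulRightL ℝ E F).flip (φ x)
  have hlocal (y : E) : fderiv ℝ (localize ψ φ y) x
      = ψ (x - y) • fderiv ℝ φ x + tensor (fderiv ℝ ψ (x - y)) :=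
    fderiv_localize (hψ.differentiable one_ne_zero) hφ y x
  have htensor (z : E) : ‖tensor (fderiv ℝ ψ z)‖ ^ 2 = ‖fderiv ℝ ψ z‖ ^ 2 * ‖φ x‖ ^ 2 := by
    rw [← mul_pow, ← ContinuousLinearMap.norm_smulRight_apply]
    rfl
  have herror := integral_form_le_opNorm_mul_integral_norm_sq (μ := μ) Q
    (tensor.continuous.comp (hψ.continuous_fderiv one_ne_zero))
    ((hψs.fderiv ℝ).comp_left (map_zero tensor))
  simp only [Function.comp_apply, htensor, integral_mul_const] at herror
  simp only [hlocal]
  rw [integral_sub_left_eq_self (fun z ↦ Q (ψ z • fderiv ℝ φ x + tensor (fderiv ℝ ψ z))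
    (ψ z • fderiv ℝ φ x + tensor (fderiv ℝ ψ z))) μ x,
    integral_form_smul_add_fderiv Q _ tensor hψ hψs hψ1]
  exact add_le_add_right herror _

theorem integral_integral_form_fderiv_localize_le
    {B : E → (E →L[ℝ] F) →L[ℝ] (E →L[ℝ] F) →L[ℝ] ℝ} (hB : Continuous B)
    {A : ℝ} (hA : ∀ x, ‖B x‖ ≤ A)
    {ψ : E → ℝ} (hψ : ContDiff ℝ 1 ψ) (hψs : HasCompactSupport ψ) (hψ1 : ∫ z, ψ z ^ 2 ∂μ = 1)
    {φ : E → F} (hφ : ContDiff ℝ 1 φ) (hφs : HasCompactSupport φ) :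
    ∫ y, ∫ x, B x (fderiv ℝ (localize ψ φ y) x) (fderiv ℝ (localize ψ φ y) x) ∂μ ∂μ
      ≤ ∫ x, B x (fderiv ℝ φ x) (fderiv ℝ φ x) ∂μ
        + A * (∫ z, ‖fderiv ℝ ψ z‖ ^ 2 ∂μ) * ∫ x, ‖φ x‖ ^ 2 ∂μ := by
  have hlocal : Integrable (fun p : E × E ↦ B p.1 (fderiv ℝ (localize ψ φ p.2) p.1)
      (fderiv ℝ (localize ψ φ p.2) p.1)) (μ.prod μ) :=
    integrable_form_of_hasCompactSupport (hB.comp continuous_fst)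
      (continuous_fderiv_localize hψ hφ) (hasCompactSupport_fderiv_localize
        (hψ.differentiable one_ne_zero) hψs (hφ.differentiable one_ne_zero) hφs)
  have hform : Integrable (fun x ↦ B x (fderiv ℝ φ x) (fderiv ℝ φ x)) μ :=
    integrable_form_of_hasCompactSupport hB (hφ.continuous_fderiv one_ne_zero) (hφs.fderiv ℝ)
  have hsq : Integrable (fun x ↦ ‖φ x‖ ^ 2) μ :=
    integrable_norm_sq_of_hasCompactSupport hφ.continuous hφs
  rw [← integral_integral_swap hlocal, ← integral_const_mul,
    ← integral_add hform (hsq.const_mul _)]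
  refine integral_mono hlocal.integral_prod_left (hform.add (hsq.const_mul _)) fun x ↦ ?_
  refine (integral_form_fderiv_localize_le (B x) hψ hψs hψ1
    (hφ.differentiable one_ne_zero) x).trans (add_le_add_right ?_ _)
  rw [mul_assoc]
  exact mul_le_mul_of_nonneg_right (hA x) (by positivity)

end Localization

section Fourier

variable {E F ι κ : Type*} [NormedAddCommGroup E] [InnerProductSpace ℝ E]
  [NormedAddCommGroup F] [NormedSpace ℝ F] [Fintype ι] [Fintype κ]

theorem eq_sum_repr_smul_rankOne (b : OrthonormalBasis ι ℝ E) (f : Module.Basis κ ℝ F)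
    (T : E →L[ℝ] F) :
    T = ∑ p : ι × κ, f.repr (T (b p.1)) p.2 • rankOne ℝ (f p.2) (b p.1) := by
  classical
  refine ContinuousLinearMap.coe_injective (b.toBasis.ext fun i ↦ ?_)
  simp [Fintype.sum_prod_type, b.inner_eq_ite, f.sum_repr]

theorem apply_apply_eq_sum_repr (b : OrthonormalBasis ι ℝ E) (f : Module.Basis κ ℝ F)
    (Q : (E →L[ℝ] F) →L[ℝ] (E →L[ℝ] F) →L[ℝ] ℝ) (S T : E →L[ℝ] F) :
    Q S T = ∑ p : ι × κ, ∑ q : ι × κ,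
      Q (rankOne ℝ (f p.2) (b p.1)) (rankOne ℝ (f q.2) (b q.1))
        * (f.repr (S (b p.1)) p.2 * f.repr (T (b q.1)) q.2) := by
  conv_lhs => rw [eq_sum_repr_smul_rankOne b f S, eq_sum_repr_smul_rankOne b f T]
  simp only [map_sum, map_smul, sum_apply, smul_apply, smul_eq_mul,
    Finset.mul_sum]
  rw [Finset.sum_comm]
  refine Finset.sum_congr rfl fun p _ ↦ Finset.sum_congr rfl fun q _ ↦ ?_
  ring

theorem sum_mul_re_inner_eq_rankOne_re_add_rankOne_im (b : OrthonormalBasis ι ℝ E)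
    (f : Module.Basis κ ℝ F) (Q : (E →L[ℝ] F) →L[ℝ] (E →L[ℝ] F) →L[ℝ] ℝ) (ξ : E) (z : κ → ℂ) :
    ∑ p : ι × κ, ∑ q : ι × κ, Q (rankOne ℝ (f p.2) (b p.1)) (rankOne ℝ (f q.2) (b q.1))
        * (inner ℝ ξ (b p.1) * inner ℝ ξ (b q.1) * (inner ℂ (z p.2) (z q.2)).re)
      = Q (rankOne ℝ (f.equivFun.symm fun k ↦ (z k).re) ξ)
            (rankOne ℝ (f.equivFun.symm fun k ↦ (z k).re) ξ)
        + Q (rankOne ℝ (f.equivFun.symm fun k ↦ (z k).im) ξ)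
            (rankOne ℝ (f.equivFun.symm fun k ↦ (z k).im) ξ) := by
  have hrepr (η : κ → ℝ) (k : κ) : f.repr (f.equivFun.symm η) k = η k := by
    rw [← f.equivFun_apply, LinearEquiv.apply_symm_apply]
  rw [apply_apply_eq_sum_repr b f Q (rankOne ℝ (f.equivFun.symm fun k ↦ (z k).re) ξ),
    apply_apply_eq_sum_repr b f Q (rankOne ℝ (f.equivFun.symm fun k ↦ (z k).im) ξ)]
  simp only [← Finset.sum_add_distrib, InnerProductSpace.rankOne_apply, map_smul,
    Finsupp.smul_apply, hrepr, smul_eq_mul]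
  refine Finset.sum_congr rfl fun p _ ↦ Finset.sum_congr rfl fun q _ ↦ ?_
  simp only [RCLike.inner_apply, Complex.mul_re, Complex.conj_re, Complex.conj_im]
  ring

theorem exists_schwartz_lineDeriv_eq (ℓ : F →L[ℝ] ℝ) {φ : E → F}
    (hφ : ContDiff ℝ (⊤ : ℕ∞) φ) (hφs : HasCompactSupport φ) :
    ∃ S : 𝓢(E, ℂ), ∀ v x, (∂_{v} S : 𝓢(E, ℂ)) x = ℓ (fderiv ℝ φ x v) := by
  let L : F →L[ℝ] ℂ := Complex.ofRealCLM ∘L ℓ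
  refine ⟨(hφs.comp_left (map_zero L)).toSchwartzMap (L.contDiff.comp hφ), fun v x ↦ ?_⟩
  rw [SchwartzMap.lineDerivOp_apply_eq_fderiv]
  exact DFunLike.congr_fun
    (L.hasFDerivAt.comp x (hφ.differentiable (by simp) x).hasFDerivAt).fderiv v

variable [FiniteDimensional ℝ E] [MeasurableSpace E] [BorelSpace E]

theorem integrable_re_inner_schwartz (f g : 𝓢(E, ℂ)) :
    Integrable (fun x ↦ (inner ℂ (f x) (g x)).re) := by
  have h : Integrable fun x ↦ g x * star (f x) := (g.memLp 2).integrable_mul (f.memLp 2).star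
  exact h.re

theorem integral_re_inner_fourier (f g : 𝓢(E, ℂ)) :
    ∫ ξ, (inner ℂ (𝓕 f ξ) (𝓕 g ξ)).re = ∫ x, (inner ℂ (f x) (g x)).re := by
  have hre (f g : 𝓢(E, ℂ)) : ∫ x, (inner ℂ (f x) (g x)).re = (∫ x, inner ℂ (f x) (g x)).re :=
    integral_re ((g.memLp 2).integrable_mul (f.memLp 2).star)
  rw [hre, hre, SchwartzMap.integral_inner_fourier_fourier]

theorem integral_sum_re_inner_fourier (c : ι → ι → ℝ) (f : ι → 𝓢(E, ℂ)) :
    ∫ ξ, ∑ p, ∑ q, c p q * (inner ℂ (𝓕 (f p) ξ) (𝓕 (f q) ξ)).re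
      = ∫ x, ∑ p, ∑ q, c p q * (inner ℂ (f p x) (f q x)).re := by
  have hsum (f : ι → 𝓢(E, ℂ)) : ∫ x, ∑ p, ∑ q, c p q * (inner ℂ (f p x) (f q x)).re
      = ∑ p, ∑ q, c p q * ∫ x, (inner ℂ (f p x) (f q x)).re := by
    have hint (p q : ι) : Integrable fun x ↦ c p q * (inner ℂ (f p x) (f q x)).re :=
      (integrable_re_inner_schwartz _ _).const_mul _
    rw [integral_finsetSum _ fun p _ ↦ integrable_finsetSum _ fun q _ ↦ hint p q]
    refine Finset.sum_congr rfl fun p _ ↦ ?_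
    simp only [integral_finsetSum _ fun q _ ↦ hint p q, integral_const_mul]
  rw [hsum f, hsum fun p ↦ 𝓕 (f p)]
  simp only [integral_re_inner_fourier]

theorem re_inner_fourier_lineDeriv (f g : 𝓢(E, ℂ)) (v w ξ : E) :
    (inner ℂ (𝓕 (∂_{v} f) ξ) (𝓕 (∂_{w} g) ξ)).re
      = (2 * Real.pi) ^ 2 * (inner ℝ ξ v * inner ℝ ξ w * (inner ℂ (𝓕 f ξ) (𝓕 g ξ)).re) := by
  have hderiv (f : 𝓢(E, ℂ)) (v : E) :
      𝓕 (∂_{v} f) ξ = 2 * Real.pi * Complex.I * (inner ℝ ξ v * 𝓕 f ξ) := by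
    rw [SchwartzMap.fourier_lineDerivOp_eq, smul_apply,
      SchwartzMap.smulLeftCLM_apply_apply (by fun_prop)]
    simp
  have hinner : inner ℂ (𝓕 (∂_{v} f) ξ) (𝓕 (∂_{w} g) ξ)
      = ((2 * Real.pi) ^ 2 * (inner ℝ ξ v * inner ℝ ξ w) : ℝ) * inner ℂ (𝓕 f ξ) (𝓕 g ξ) := by
    simp only [hderiv, RCLike.inner_apply, map_mul, map_ofNat, Complex.conj_ofReal, Complex.conj_I]
    push_cast
    linear_combination (-(2 * Real.pi : ℂ) ^ 2 * (inner ℝ ξ v * inner ℝ ξ w)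
      * (𝓕 g ξ * (starRingEnd ℂ) (𝓕 f ξ))) * Complex.I_sq
  rw [hinner, Complex.re_ofReal_mul, mul_assoc]

variable [FiniteDimensional ℝ F]

theorem integral_form_fderiv_nonneg {Q : (E →L[ℝ] F) →L[ℝ] (E →L[ℝ] F) →L[ℝ] ℝ}
    (hQ : ∀ (ξ : E) (η : F), 0 ≤ Q (rankOne ℝ η ξ) (rankOne ℝ η ξ)) {φ : E → F}
    (hφ : ContDiff ℝ (⊤ : ℕ∞) φ) (hφs : HasCompactSupport φ) :
    0 ≤ ∫ x, Q (fderiv ℝ φ x) (fderiv ℝ φ x) := by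
  let b := stdOrthonormalBasis ℝ E
  let f := Module.finBasis ℝ F
  choose S hS using fun k ↦ exists_schwartz_lineDeriv_eq (f.coord k).toContinuousLinearMap hφ hφs
  have hform (x : E) : Q (fderiv ℝ φ x) (fderiv ℝ φ x)
      = ∑ p : _ × _, ∑ q : _ × _, Q (rankOne ℝ (f p.2) (b p.1)) (rankOne ℝ (f q.2) (b q.1))
        * (inner ℂ (∂_{b p.1} (S p.2) x) (∂_{b q.1} (S q.2) x)).re := by
    rw [apply_apply_eq_sum_repr b f]
    refine Finset.sum_congr rfl fun p _ ↦ Finset.sum_congr rfl fun q _ ↦ ?_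
    simp [hS, mul_comm]
  simp only [hform]
  rw [← integral_sum_re_inner_fourier _ fun p : _ × _ ↦ ∂_{b p.1} (S p.2)]
  refine integral_nonneg fun ξ ↦ ?_
  simp only [re_inner_fourier_lineDeriv, mul_left_comm _ ((2 * Real.pi) ^ 2), ← Finset.mul_sum,
    sum_mul_re_inner_eq_rankOne_re_add_rankOne_im b f Q ξ fun k ↦ 𝓕 (S k) ξ]
  exact mul_nonneg (by positivity) (add_nonneg (hQ _ _) (hQ _ _))

end Fourier

section HilbertSchmidt

variable {E F ι : Type*} [NormedAddCommGroup E] [InnerProductSpace ℝ E]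
  [NormedAddCommGroup F] [InnerProductSpace ℝ F] [Fintype ι]

/-- The Hilbert–Schmidt inner product on `E →L[ℝ] F`, computed in the orthonormal basis `b`; its
value on a gradient is the integrand of the Dirichlet energy. -/
def hilbertSchmidtForm (b : OrthonormalBasis ι ℝ E) :
    (E →L[ℝ] F) →L[ℝ] (E →L[ℝ] F) →L[ℝ] ℝ :=
  ∑ i, (innerSL ℝ).bilinearComp (.apply ℝ F (b i)) (.apply ℝ F (b i))

theorem hilbertSchmidtForm_apply_self (b : OrthonormalBasis ι ℝ E) (T : E →L[ℝ] F) :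
    hilbertSchmidtForm b T T = ∑ i, ‖T (b i)‖ ^ 2 := by
  simp [hilbertSchmidtForm]

theorem hilbertSchmidtForm_rankOne_self (b : OrthonormalBasis ι ℝ E) (ξ : E) (η : F) :
    hilbertSchmidtForm b (rankOne ℝ η ξ) (rankOne ℝ η ξ) = ‖ξ‖ ^ 2 * ‖η‖ ^ 2 := by
  simp only [hilbertSchmidtForm_apply_self, InnerProductSpace.rankOne_apply, norm_smul, mul_pow,
    ← Finset.sum_mul, b.sum_sq_norm_inner_left]

theorem norm_sq_le_hilbertSchmidtForm (b : OrthonormalBasis ι ℝ E) (T : E →L[ℝ] F) :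
    ‖T‖ ^ 2 ≤ hilbertSchmidtForm b T T := by
  rw [hilbertSchmidtForm_apply_self]
  refine (Real.le_sqrt (norm_nonneg _) (by positivity)).1
    (T.opNorm_le_bound (Real.sqrt_nonneg _) fun x ↦ ?_)
  calc
    ‖T x‖ = ‖∑ i, inner ℝ (b i) x • T (b i)‖ := by
      simp only [← map_smul, ← map_sum, b.sum_repr' x]
    _ ≤ ∑ i, ‖T (b i)‖ * ‖inner ℝ (b i) x‖ := by
      refine norm_sum_le_of_le _ fun i _ ↦ ?_
      rw [norm_smul, mul_comm]
    _ ≤ √(∑ i, ‖T (b i)‖ ^ 2) * √(∑ i, ‖inner ℝ (b i) x‖ ^ 2) :=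
      Real.sum_mul_le_sqrt_mul_sqrt _ _ _
    _ = √(∑ i, ‖T (b i)‖ ^ 2) * ‖x‖ := by
      rw [b.sum_sq_norm_inner_right, Real.sqrt_sq (norm_nonneg x)]

end HilbertSchmidt

section Garding

variable {E F ι : Type*} [NormedAddCommGroup E] [InnerProductSpace ℝ E] [FiniteDimensional ℝ E]
  [MeasurableSpace E] [BorelSpace E] [NormedAddCommGroup F] [InnerProductSpace ℝ F]
  [FiniteDimensional ℝ F] [Fintype ι] {B : E → (E →L[ℝ] F) →L[ℝ] (E →L[ℝ] F) →L[ℝ] ℝ}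

theorem integral_form_fderiv_localize_nonneg (b : OrthonormalBasis ι ℝ E) (hB : Continuous B)
    {ε δ : ℝ} {y : E} (hε : ∀ x, dist x y < δ → ‖B y - B x‖ ≤ ε)
    (hBy : ∀ (ξ : E) (η : F), 0 ≤ B y (rankOne ℝ η ξ) (rankOne ℝ η ξ))
    {ψ : E → ℝ} (hψ : ContDiff ℝ (⊤ : ℕ∞) ψ) (hψδ : tsupport ψ ⊆ Metric.ball 0 δ)
    {φ : E → F} (hφ : ContDiff ℝ (⊤ : ℕ∞) φ) (hφs : HasCompactSupport φ) :
    0 ≤ ∫ x, (B x + ε • hilbertSchmidtForm (F := F) b) (fderiv ℝ (localize ψ φ y) x)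
      (fderiv ℝ (localize ψ φ y) x) := by
  have hw := contDiff_localize hψ hφ y
  have hws := hasCompactSupport_localize (ψ := ψ) hφs y
  have hDw : Continuous (fderiv ℝ (localize ψ φ y)) := hw.continuous_fderiv (by simp)
  refine (integral_form_fderiv_nonneg hBy hw hws).trans (integral_mono
    (integrable_form_of_hasCompactSupport continuous_const hDw (hws.fderiv ℝ))
    (integrable_form_of_hasCompactSupport (hB.add continuous_const) hDw (hws.fderiv ℝ)) fun x ↦ ?_)
  by_cases hx : x - y ∈ tsupport ψ
  · have hxy : ‖B y - B x‖ ≤ ε := hε x (by simpa [dist_eq_norm] using hψδ hx)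
    set T := fderiv ℝ (localize ψ φ y) x
    have hfreeze : (B y - B x) T T ≤ ε * hilbertSchmidtForm b T T :=
      calc
        (B y - B x) T T ≤ ‖B y - B x‖ * ‖T‖ * ‖T‖ :=
          (le_abs_self _).trans ((B y - B x).le_opNorm₂ T T)
        _ = ‖B y - B x‖ * ‖T‖ ^ 2 := by ring
        _ ≤ ε * hilbertSchmidtForm b T T :=
          mul_le_mul hxy (norm_sq_le_hilbertSchmidtForm b T) (by positivity)
            ((norm_nonneg _).trans hxy)
    simpa [add_comm] using hfreeze
  · simp [fderiv_localize_eq_zero (hψ.differentiable (by simp)) (hφ.differentiable (by simp)) hx]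

theorem exists_integral_form_fderiv_add_nonneg (b : OrthonormalBasis ι ℝ E)
    {A : ℝ} (hA : ∀ x, ‖B x‖ ≤ A) (hB : UniformContinuous B)
    (hBnn : ∀ x (ξ : E) (η : F), 0 ≤ B x (rankOne ℝ η ξ) (rankOne ℝ η ξ)) {ε : ℝ} (hε : 0 < ε) :
    ∃ C : ℝ, ∀ φ : E → F, ContDiff ℝ (⊤ : ℕ∞) φ → HasCompactSupport φ →
      0 ≤ (∫ x, (B x + ε • hilbertSchmidtForm (F := F) b) (fderiv ℝ φ x) (fderiv ℝ φ x))
        + C * ∫ x, ‖φ x‖ ^ 2 := by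
  obtain ⟨δ, hδ, hBδ⟩ := Metric.uniformContinuous_iff.1 hB ε hε
  obtain ⟨ψ, hψ, hψs, hψδ, hψ1⟩ := exists_contDiff_integral_sq_eq_one (E := E) (μ := volume) hδ
  let H : (E →L[ℝ] F) →L[ℝ] (E →L[ℝ] F) →L[ℝ] ℝ := ε • hilbertSchmidtForm b
  have hBH (x : E) : ‖B x + H‖ ≤ A + ‖H‖ := (norm_add_le _ _).trans (by grw [hA x])
  refine ⟨(A + ‖H‖) * ∫ z, ‖fderiv ℝ ψ z‖ ^ 2, fun φ hφ hφs ↦ ?_⟩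
  have hlocal (y : E) : 0 ≤ ∫ x, (B x + H) (fderiv ℝ (localize ψ φ y) x)
      (fderiv ℝ (localize ψ φ y) x) := by
    refine integral_form_fderiv_localize_nonneg b hB.continuous (fun x hx ↦ ?_) (hBnn y) hψ hψδ
      hφ hφs
    rw [← dist_eq_norm, dist_comm]
    exact (hBδ hx).le
  exact (integral_nonneg hlocal).trans (integral_integral_form_fderiv_localize_le
    (hB.continuous.add continuous_const) hBH (hψ.of_le (by simp)) hψs hψ1 (hφ.of_le (by simp)) hφs)

theorem statement_10_general (b : OrthonormalBasis ι ℝ E)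
    {A : ℝ} (hA : ∀ x, ‖B x‖ ≤ A) (hB : UniformContinuous B) {Λ : ℝ}
    (hΛ : ∀ x (ξ : E) (η : F), Λ * (‖ξ‖ ^ 2 * ‖η‖ ^ 2) ≤ B x (rankOne ℝ η ξ) (rankOne ℝ η ξ))
    {ε : ℝ} (hε : 0 < ε) :
    ∃ C : ℝ, ∀ φ : E → F, ContDiff ℝ (⊤ : ℕ∞) φ → HasCompactSupport φ →
      (Λ - ε) * (∫ x, ∑ i, ‖fderiv ℝ φ x (b i)‖ ^ 2) - C * (∫ x, ‖φ x‖ ^ 2)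
        ≤ ∫ x, B x (fderiv ℝ φ x) (fderiv ℝ φ x) := by
  let H : (E →L[ℝ] F) →L[ℝ] (E →L[ℝ] F) →L[ℝ] ℝ := hilbertSchmidtForm b
  have hshift (x : E) : ‖B x - Λ • H‖ ≤ A + ‖Λ • H‖ := (norm_sub_le _ _).trans (by grw [hA x])
  obtain ⟨C, hC⟩ := exists_integral_form_fderiv_add_nonneg b hshift
    (hB.sub uniformContinuous_const)
    (fun x ξ η ↦ by simpa [H, hilbertSchmidtForm_rankOne_self] using hΛ x ξ η) hε
  refine ⟨C, fun φ hφ hφs ↦ ?_⟩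
  have hDφ : Continuous (fderiv ℝ φ) := hφ.continuous_fderiv (by simp)
  have hsplit : ∫ x, (B x - Λ • H + ε • H) (fderiv ℝ φ x) (fderiv ℝ φ x)
      = (∫ x, B x (fderiv ℝ φ x) (fderiv ℝ φ x))
        - (Λ - ε) * ∫ x, H (fderiv ℝ φ x) (fderiv ℝ φ x) := by
    rw [← integral_const_mul, ← integral_sub
      (integrable_form_of_hasCompactSupport hB.continuous hDφ (hφs.fderiv ℝ))
      ((integrable_form_of_hasCompactSupport continuous_const hDφ (hφs.fderiv ℝ)).const_mul _)]
    refine integral_congr_ae (.of_forall fun x ↦ ?_)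
    simp only [add_apply, sub_apply, smul_apply, smul_eq_mul]
    ring
  have hnonneg := hC φ hφ hφs
  rw [hsplit] at hnonneg
  simp only [H, hilbertSchmidtForm_apply_self] at hnonneg
  linarith

end Garding

section Coordinates

variable {d N : ℕ}

/-- The entry `∂ᵢφᵏ` of a gradient `Dφ`, as a linear functional of the gradient. -/
def gradientEntry (i : Fin d) (k : Fin N) :
    (EuclideanSpace ℝ (Fin d) →L[ℝ] EuclideanSpace ℝ (Fin N)) →L[ℝ] ℝ :=
  EuclideanSpace.proj k ∘L .apply ℝ _ (EuclideanSpace.single i 1)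

/-- The form `∑ c i j k l ∂ᵢφᵏ ∂ⱼφˡ` with coefficient tensor `c`. It is bundled as a continuous
linear map in `c`, so that bounds and uniform continuity pass from coefficients to forms. -/
def tensorForm : (Fin d → Fin d → Fin N → Fin N → ℝ) →L[ℝ]
    (EuclideanSpace ℝ (Fin d) →L[ℝ] EuclideanSpace ℝ (Fin N)) →L[ℝ]
      (EuclideanSpace ℝ (Fin d) →L[ℝ] EuclideanSpace ℝ (Fin N)) →L[ℝ] ℝ :=
  ∑ i, ∑ j, ∑ k, ∑ l, (.proj l ∘L .proj k ∘L .proj j ∘L .proj i :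
      (Fin d → Fin d → Fin N → Fin N → ℝ) →L[ℝ] ℝ).smulRight
    ((gradientEntry i k).smulRight (gradientEntry j l))

theorem tensorForm_apply (c : Fin d → Fin d → Fin N → Fin N → ℝ)
    (S T : EuclideanSpace ℝ (Fin d) →L[ℝ] EuclideanSpace ℝ (Fin N)) :
    tensorForm c S T = ∑ i, ∑ j, ∑ k, ∑ l, c i j k l * S (EuclideanSpace.single i 1) k
      * T (EuclideanSpace.single j 1) l := by
  simp [tensorForm, gradientEntry, mul_assoc]

theorem tensorForm_rankOne_self (c : Fin d → Fin d → Fin N → Fin N → ℝ)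
    (ξ : EuclideanSpace ℝ (Fin d)) (η : EuclideanSpace ℝ (Fin N)) :
    tensorForm c (rankOne ℝ η ξ) (rankOne ℝ η ξ)
      = ∑ i, ∑ j, ∑ k, ∑ l, c i j k l * ξ i * ξ j * η k * η l := by
  simp only [tensorForm_apply, InnerProductSpace.rankOne_apply, PiLp.smul_apply, smul_eq_mul,
    EuclideanSpace.inner_single_right, one_mul, conj_trivial]
  congr! 4
  ring

theorem pd_component {φ : EuclideanSpace ℝ (Fin d) → EuclideanSpace ℝ (Fin N)}
    {x : EuclideanSpace ℝ (Fin d)} (hφ : DifferentiableAt ℝ φ x) (i : Fin d) (k : Fin N) :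
    pd i (fun y ↦ φ y k) x = fderiv ℝ φ x (EuclideanSpace.single i 1) k :=
  DFunLike.congr_fun ((EuclideanSpace.proj k).hasFDerivAt.comp x hφ.hasFDerivAt).fderiv _

theorem uniformContinuous_tensorForm {X : Type*} [UniformSpace X]
    {a : Fin d → Fin d → Fin N → Fin N → X → ℝ}
    (ha : ∀ i j k l, UniformContinuous (a i j k l)) :
    UniformContinuous fun x ↦ tensorForm fun i j k l ↦ a i j k l x :=
  tensorForm.uniformContinuous.comp <| uniformContinuous_pi.2 fun i ↦ uniformContinuous_pi.2
    fun j ↦ uniformContinuous_pi.2 fun k ↦ uniformContinuous_pi.2 fun l ↦ ha i j k l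

theorem norm_tensorForm_le {c : Fin d → Fin d → Fin N → Fin N → ℝ} {A : ℝ}
    (hc : ∀ i j k l, |c i j k l| ≤ A) :
    ‖tensorForm c‖ ≤ ‖tensorForm (d := d) (N := N)‖ * |A| := by
  refine tensorForm.le_opNorm_of_le ?_
  simp only [pi_norm_le_iff_of_nonneg (abs_nonneg A)]
  exact fun i j k l ↦ (hc i j k l).trans (le_abs_self A)

end Coordinates

/-- Gårding's inequality for second order systems in divergence
form: bounded, uniformly continuous coefficients satisfying the pointwise
rank-one (Legendre–Hadamard) positivity condition give coercivity of the
Dirichlet form up to a lower order `L²` term. -/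
theorem statement_10
    (d N : ℕ) (hd : 1 ≤ d) (hN : 1 ≤ N) (lam : ℝ) (hlam : 0 < lam)
    (a : Fin d → Fin d → Fin N → Fin N → EuclideanSpace ℝ (Fin d) → ℝ)
    (hbdd : ∃ A : ℝ, ∀ i j k l x, |a i j k l x| ≤ A)
    (hucont : ∀ i j k l, UniformContinuous (a i j k l))
    (hLH : ∀ (x : EuclideanSpace ℝ (Fin d)) (ξ : EuclideanSpace ℝ (Fin d))
      (η : EuclideanSpace ℝ (Fin N)),
      lam⁻¹ * (‖ξ‖ ^ 2 * ‖η‖ ^ 2) ≤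
        ∑ i, ∑ j, ∑ k, ∑ l, a i j k l x * ξ i * ξ j * η k * η l) :
    ∃ C : ℝ, ∀ φ : EuclideanSpace ℝ (Fin d) → EuclideanSpace ℝ (Fin N),
      ContDiff ℝ (⊤ : ℕ∞) φ → HasCompactSupport φ →
      ((2 * lam)⁻¹ * (∫ x, ∑ i, ∑ k, (pd i (fun y => φ y k) x) ^ 2)
          - C * (∫ x, ‖φ x‖ ^ 2)) ≤
        ∫ x, ∑ i, ∑ j, ∑ k, ∑ l,
          a i j k l x * pd i (fun y => φ y k) x * pd j (fun y => φ y l) x := by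
  obtain ⟨A, hA⟩ := hbdd
  obtain ⟨C, hC⟩ := statement_10_general (EuclideanSpace.basisFun (Fin d) ℝ)
    (fun x ↦ norm_tensorForm_le fun i j k l ↦ hA i j k l x) (uniformContinuous_tensorForm hucont)
    (fun x ξ η ↦ (hLH x ξ η).trans_eq (tensorForm_rankOne_self _ ξ η).symm)
    (ε := (2 * lam)⁻¹) (by positivity)
  refine ⟨C, fun φ hφ hφs ↦ ?_⟩
  have hhalf : lam⁻¹ - (2 * lam)⁻¹ = (2 * lam)⁻¹ := by ring
  simpa only [hhalf, tensorForm_apply, EuclideanSpace.basisFun_apply,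
    EuclideanSpace.real_norm_sq_eq, pd_component (hφ.differentiable (by simp) _)] using hC φ hφ hφs
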